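/- Let q ≥ 1, let {X_{i,j} : i ≥ 1, j ≥ 1} be a double array of nonnegative integrable random variables satisfying Condition (H_{2q}), let {b_n : n ≥ 1} be an increasing sequence of positive constants, and let {λ_{m,n,i,j}} be positive constants with a_{m,n} = ∑_{i=1}^{m} ∑_{j=1}^{n} λ_{m,n,i,j} and X_{s,m,n} = X_{m,n}·1(X_{m,n} ≤ b_{2^s}) + b_{2^s}·1(X_{m,n} > b_{2^s}). Then there exists a finite constant C(q) depending only on q such that for all ε > 0, m ≥ 1, n ≥ 1: if (a) ∑_{i=1}^{2^m} ∑_{j=1}^{2^n} E( X_{i,j}·1(X_{i,j} > b_{2^{m+n}}) ) ≤ ε a_{m,n} and (b) 6 ∑_{s=1}^{m} ∑_{t=1}^{n} 2^{s+t} b_{2^{s+t}} max_{1≤i<2^m, 1≤j<2^n} P(X_{i,j} > b_{2^{s+t−2}}) ≤ ε a_{m,n}, then P( max_{1≤u<2^m, 1≤v<2^n} |∑_{i=1}^{u} ∑_{j=1}^{v} (X_{i,j} − E X_{i,j})| ≥ 3 a_{m,n} ε ) ≤ ∑_{i=1}^{2^m} ∑_{j=1}^{2^n} P(X_{i,j}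 > b_{2^{m+n}}) + C(q) ε^{−2q} ∑_{s=1}^{m} ∑_{t=1}^{n} 2^{m+n} λ_{m,n,s,t}^{−2q} ( max_{1≤i<2^m, 1≤j<2^n} E X_{s+t,i,j}^{2q} + 2^{(s+t)(q−1)} max_{1≤i<2^m, 1≤j<2^n} (E X_{s+t,i,j}^2)^q ). -/

import Mathlib

/-!
The bound comes from a dyadic chaining in which the truncation level is tied to the scale. Write
`R_k` for the centred sums of the variables truncated at `b (2 ^ k)`, and let `u_s`, `v_t` be the
largest multiples of `2 ^ s`, `2 ^ t` not exceeding `u`, `v`. The quantity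
`D s t = R_{s+t}((u_s, u] × (v_t, v])` vanishes when `s = 0` or `t = 0` and equals the full sum at
`(m, n)`, so that sum is the double telescoping sum of the mixed differences of `D`
(`abs_rectSum_le`). With `A = (u_s, u_{s-1}]`, `A' = (u_{s-1}, u]`, and `B`, `B'` likewise, a mixed
difference consists of `R_{s+t}(A × B)` and of centred sums of increments between consecutive
truncation levels over `A' × B`, `A × B'`, `A' × B'`. Here `A` is empty or a dyadic block of length
`2 ^ (s-1)`, and `A'` is contained in such a block. The increments are nonnegative, so their
centred sums over a subrectangle are controlled by the centred sums over the enclosing block and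
their means (`abs_increment_le`). Hence only `R_{s+t}`, `R_{s+t-1}`, `R_{s+t-2}` on the
`2 ^ (m-s+1) * 2 ^ (n-t+1)` blocks of scale `(s, t)` matter (`abs_chain_step_le`).

If no variable exceeds `b (2 ^ (m + n))`, the hypothesis on the means of the large parts
bounds the change of the means under truncation by `ε a`, where `a` is the sum of the `λ_{s,t}`,
the hypothesis on the tails bounds the means of the increments in total by `ε a / 6`, and if all the block sums at scale `(s, t)` are below `λ_{s,t} ε / 9` the chaining contributes at most
`ε a`. The sum of these is less than `3 ε a`. The exceptional event is therefore covered by the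
events of a large variable and of a large block sum; the latter have small probability by Markov's
inequality and the moment condition (`rectSum_tail_le`).
-/

open MeasureTheory ProbabilityTheory Finset Filter
open scoped NNReal ENNReal

noncomputable section

/-- `rlog x` is the natural logarithm of `max x 2`. -/
def rlog (x : ℝ) : ℝ := Real.log (max x 2)

/-- `itlog k x` is the `k`-fold iterate of `rlog` applied to `x`. -/
def itlog : ℕ → ℝ → ℝ
  | 0, x => x
  | k + 1, x => rlog (itlog k x)

/-- `logNu2 ν x = (log x)(log log x) ⋯ (log ⋯ log x)²`, the product of the first `ν`
iterated logarithms of `x`, with the last (`ν`-fold iterated) factor squared. -/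
def logNu2 (ν : ℕ) (x : ℝ) : ℝ := (∏ k ∈ Finset.Icc 1 ν, itlog k x) * itlog ν x

/-- The maximum of the (nonnegative) values `g i j` over `1 ≤ i ≤ M`, `1 ≤ j ≤ N`. -/
def maxNN (M N : ℕ) (g : ℕ → ℕ → ℝ) : ℝ :=
  (((Finset.Icc 1 M ×ˢ Finset.Icc 1 N).sup fun p => Real.toNNReal (g p.1 p.2) : ℝ≥0) : ℝ)

/-- `maxDS f m n = max_{1 ≤ u ≤ m, 1 ≤ v ≤ n} |∑_{i=1}^{u} ∑_{j=1}^{v} f i j|`. -/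
def maxDS (f : ℕ → ℕ → ℝ) (m n : ℕ) : ℝ :=
  maxNN m n fun u v => |∑ i ∈ Finset.Icc 1 u, ∑ j ∈ Finset.Icc 1 v, f i j|

/-- Index set of a doubly-indexed array: pairs of indices that are both at least `1`. -/
abbrev PIdx : Type := {k : ℕ × ℕ // 1 ≤ k.1 ∧ 1 ≤ k.2}

/-- Condition (H_{2q}) with a given constant `C`: for every finite subfamily and every
family of nondecreasing functions (whose relevant expectations are finite),
`E|∑ (f_λ(X_λ) - E f_λ(X_λ))|^{2q}
   ≤ C (|I| max E|f_λ(X_λ)|^{2q} + |I|^q max (E f_λ(X_λ)²)^q)`. -/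
def CondHWith {Ω : Type*} [MeasureSpace Ω] {Λ : Type*} (q C : ℝ) (X : Λ → Ω → ℝ) : Prop :=
  ∀ (I : Finset Λ) (hI : I.Nonempty) (f : Λ → ℝ → ℝ),
    (∀ l ∈ I, Monotone (f l)) →
    (∀ l ∈ I, Integrable fun ω => f l (X l ω)) →
    (∀ l ∈ I, Integrable fun ω => (f l (X l ω)) ^ 2) →
    (∀ l ∈ I, Integrable fun ω => |f l (X l ω)| ^ (2 * q)) →
    (Integrable fun ω => |∑ l ∈ I, (f l (X l ω) - ∫ ω', f l (X l ω'))| ^ (2 * q)) →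
    ∫ ω, |∑ l ∈ I, (f l (X l ω) - ∫ ω', f l (X l ω'))| ^ (2 * q) ≤
      C * ((I.card : ℝ) * I.sup' hI (fun l => ∫ ω, |f l (X l ω)| ^ (2 * q)) +
           (I.card : ℝ) ^ q * I.sup' hI fun l => (∫ ω, (f l (X l ω)) ^ 2) ^ q)

/-- Condition (H_{2q}): there is a finite constant for which `CondHWith` holds. -/
def CondH {Ω : Type*} [MeasureSpace Ω] {Λ : Type*} (q : ℝ) (X : Λ → Ω → ℝ) : Prop :=
  ∃ C : ℝ, CondHWith q C X

/-- The family `X` is stochastically dominated by the random variable `Y`: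
`sup_λ P(|X_λ| > x) ≤ P(|Y| > x)` for every real `x`. -/
def StochDom {Ω : Type*} [MeasureSpace Ω] {Λ : Type*} (X : Λ → Ω → ℝ) (Y : Ω → ℝ) : Prop :=
  ∀ x : ℝ, ∀ l : Λ, volume {ω | x < |X l ω|} ≤ volume {ω | x < |Y ω|}

/-- Uniform integrability: `sup_λ E(|Y_λ| 1(|Y_λ| > a)) → 0` as `a → ∞`. -/
def UnifInt {Ω : Type*} [MeasureSpace Ω] {Λ : Type*} (Y : Λ → Ω → ℝ) : Prop :=
  (∀ l, Integrable (Y l)) ∧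
  ∀ ε : ℝ, 0 < ε → ∃ a : ℝ, ∀ l, ∫ ω, (if a < |Y l ω| then |Y l ω| else 0) ≤ ε

/-- A slowly varying function: positive and measurable on `[0,∞)` with
`L(cx)/L(x) → 1` as `x → ∞` for every `c > 0`. -/
def SlowlyVarying (L : ℝ → ℝ) : Prop :=
  Measurable L ∧ (∀ x : ℝ, 0 ≤ x → 0 < L x) ∧
  ∀ c : ℝ, 0 < c → Tendsto (fun x => L (c * x) / L x) atTop (nhds 1)

/-- `Lt` is a de Bruijn conjugate of `L`. -/
def DeBruijnConjugate (L Lt : ℝ → ℝ) : Prop :=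
  SlowlyVarying Lt ∧
  Tendsto (fun x => L x * Lt (x * L x)) atTop (nhds 1) ∧
  Tendsto (fun x => Lt x * L (x * Lt x)) atTop (nhds 1)

/-- Truncation from above at level `b (2^s)`:
`X_{i,j} 1(X_{i,j} ≤ b_{2^s}) + b_{2^s} 1(X_{i,j} > b_{2^s})`. -/
def truncUp {Ω : Type*} (X : ℕ → ℕ → Ω → ℝ) (b : ℕ → ℝ) (s i j : ℕ) (ω : Ω) : ℝ :=
  if X i j ω ≤ b (2 ^ s) then X i j ω else b (2 ^ s)

/-- Two-sided truncation at level `b (2^s)`: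
`-b_{2^s} 1(X < -b_{2^s}) + X 1(|X| ≤ b_{2^s}) + b_{2^s} 1(X > b_{2^s})`. -/
def truncTwo {Ω : Type*} (X : ℕ → ℕ → Ω → ℝ) (b : ℕ → ℝ) (s i j : ℕ) (ω : Ω) : ℝ :=
  if X i j ω < -b (2 ^ s) then -b (2 ^ s)
  else if b (2 ^ s) < X i j ω then b (2 ^ s) else X i j ω

/-! ### Maxima over index rectangles -/

lemma le_maxNN {M N : ℕ} {g : ℕ → ℕ → ℝ} {i j : ℕ} (hi : i ∈ Icc 1 M) (hj : j ∈ Icc 1 N) :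
    g i j ≤ maxNN M N g := by
  have h : Real.toNNReal (g i j) ≤
      (Icc 1 M ×ˢ Icc 1 N).sup fun p => Real.toNNReal (g p.1 p.2) :=
    Finset.le_sup (f := fun p : ℕ × ℕ => Real.toNNReal (g p.1 p.2))
      (b := (i, j)) (by simp only [mem_product]; exact ⟨hi, hj⟩)
  exact (Real.le_coe_toNNReal _).trans (NNReal.coe_le_coe.2 h)

lemma maxNN_nonneg (M N : ℕ) (g : ℕ → ℕ → ℝ) : 0 ≤ maxNN M N g := NNReal.coe_nonneg _

lemma exists_le_of_le_maxNN {M N : ℕ} {g : ℕ → ℕ → ℝ} {c : ℝ} (hc : 0 < c)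
    (h : c ≤ maxNN M N g) : ∃ i ∈ Icc 1 M, ∃ j ∈ Icc 1 N, c ≤ g i j := by
  have h' : Real.toNNReal c ≤
      (Icc 1 M ×ˢ Icc 1 N).sup fun p => Real.toNNReal (g p.1 p.2) := Real.toNNReal_le_iff_le_coe.2 h
  rw [Finset.le_sup_iff (by simpa using hc)] at h'
  obtain ⟨p, hp, hle⟩ := h'
  rw [mem_product] at hp
  refine ⟨p.1, hp.1, p.2, hp.2, ?_⟩
  by_contra! hlt
  exact absurd hle (not_le.2 ((Real.toNNReal_lt_toNNReal_iff hc).2 hlt))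

/-! ### Dyadic blocks and rectangle sums -/

/-- The sum of `f` over the rectangle `A × B`. -/
def rectSum (f : ℕ → ℕ → ℝ) (A B : Finset ℕ) : ℝ := ∑ i ∈ A, ∑ j ∈ B, f i j

/-- The `p`-th dyadic block of length `2 ^ r` inside `[1, 2 ^ m - 1]`; only the last block of each
generation is shortened, by the index `2 ^ m`, over which the maxima in the bound do not range. -/
def dyadicBlock (m r p : ℕ) : Finset ℕ := Ioc (2 ^ r * p) (min (2 ^ r * (p + 1)) (2 ^ m - 1))

/-- The largest multiple of `2 ^ r` that is at most `u`. -/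
def dyadicFloor (r u : ℕ) : ℕ := 2 ^ r * (u / 2 ^ r)

lemma card_dyadicBlock_le (m r p : ℕ) : (dyadicBlock m r p).card ≤ 2 ^ r := by
  unfold dyadicBlock
  rw [Nat.card_Ioc, mul_add]
  omega

lemma dyadicBlock_subset (m r p : ℕ) : dyadicBlock m r p ⊆ Icc 1 (2 ^ m - 1) := by
  intro x hx
  simp only [dyadicBlock, mem_Ioc, mem_Icc] at hx ⊢
  omega

lemma dyadicFloor_le (r u : ℕ) : dyadicFloor r u ≤ u := Nat.mul_div_le _ _

lemma dyadicFloor_succ (r u : ℕ) :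
    dyadicFloor (r + 1) u = 2 ^ r * (2 * (u / 2 ^ r / 2)) := by
  rw [dyadicFloor, pow_succ, ← Nat.div_div_eq_div_mul, mul_assoc]

lemma dyadicFloor_succ_le (r u : ℕ) : dyadicFloor (r + 1) u ≤ dyadicFloor r u := by
  rw [dyadicFloor_succ]
  exact Nat.mul_le_mul_left _ (by omega)

lemma div_lt_pow {m r u : ℕ} (hr : r < m) (hu : u < 2 ^ m) : u / 2 ^ r < 2 ^ (m - r) := by
  rw [Nat.div_lt_iff_lt_mul (by positivity), ← pow_add]
  rwa [Nat.sub_add_cancel hr.le]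

/-- The tail of `[1, u]` above the level-`r` dyadic floor of `u` sits in one dyadic block. -/
lemma tail_subset_block {m r u : ℕ} (hr : r < m) (hu : u < 2 ^ m) :
    ∃ p ∈ range (2 ^ (m - r)), Ioc (dyadicFloor r u) u ⊆ dyadicBlock m r p := by
  refine ⟨u / 2 ^ r, mem_range.2 (div_lt_pow hr hu), ?_⟩
  have h : u < 2 ^ r * (u / 2 ^ r + 1) := Nat.lt_mul_div_succ _ (by positivity)
  exact Ioc_subset_Ioc_right (le_min h.le (by omega))

/-- Between two consecutive dyadic floors of `u` there is either nothing or one full block,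
according to the `r`-th binary digit of `u`. -/
lemma digit_block {m r u : ℕ} (hr : r < m) (hu : u < 2 ^ m) :
    ∃ p ∈ range (2 ^ (m - r)), Ioc (dyadicFloor (r + 1) u) (dyadicFloor r u) = ∅ ∨
      Ioc (dyadicFloor (r + 1) u) (dyadicFloor r u) = dyadicBlock m r p := by
  have hlt := div_lt_pow hr hu
  refine ⟨2 * (u / 2 ^ r / 2), mem_range.2 (by omega), ?_⟩
  rcases Nat.even_or_odd' (u / 2 ^ r) with ⟨k, hk | hk⟩
  · left
    rw [dyadicFloor_succ, dyadicFloor, hk, Nat.mul_div_cancel_left _ two_pos, Ioc_self]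
  · right
    have h2 : 2 * (u / 2 ^ r / 2) + 1 = u / 2 ^ r := by omega
    have h1 := dyadicFloor_le r u
    rw [dyadicFloor_succ, dyadicBlock, h2, ← dyadicFloor, min_eq_left (by omega)]

lemma rectSum_sub (f g : ℕ → ℕ → ℝ) (A B : Finset ℕ) :
    rectSum (fun i j => f i j - g i j) A B = rectSum f A B - rectSum g A B := by
  simp only [rectSum, Finset.sum_sub_distrib]

lemma rectSum_mono {f g : ℕ → ℕ → ℝ} {A B : Finset ℕ}
    (h : ∀ i ∈ A, ∀ j ∈ B, f i j ≤ g i j) : rectSum f A B ≤ rectSum g A B :=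
  sum_le_sum fun i hi => sum_le_sum fun j hj => h i hi j hj

lemma rectSum_nonneg {f : ℕ → ℕ → ℝ} {A B : Finset ℕ}
    (h : ∀ i ∈ A, ∀ j ∈ B, 0 ≤ f i j) : 0 ≤ rectSum f A B :=
  sum_nonneg fun i hi => sum_nonneg fun j hj => h i hi j hj

lemma rectSum_subset {f : ℕ → ℕ → ℝ} {A A' B B' : Finset ℕ} (hA : A ⊆ A') (hB : B ⊆ B')
    (h : ∀ i ∈ A', ∀ j ∈ B', 0 ≤ f i j) : rectSum f A B ≤ rectSum f A' B' := by
  refine (sum_le_sum fun i hi => ?_).trans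
    (sum_le_sum_of_subset_of_nonneg hA fun i hi _ => sum_nonneg fun j hj => h i hi j hj)
  exact sum_le_sum_of_subset_of_nonneg hB fun j hj _ => h i (hA hi) j hj

lemma rectSum_split_left (f : ℕ → ℕ → ℝ) {a b c : ℕ} (hab : a ≤ b) (hbc : b ≤ c) (B : Finset ℕ) :
    rectSum f (Ioc a c) B = rectSum f (Ioc a b) B + rectSum f (Ioc b c) B :=
  (sum_Ioc_consecutive _ hab hbc).symm

lemma rectSum_split_right (f : ℕ → ℕ → ℝ) {a b c : ℕ} (hab : a ≤ b) (hbc : b ≤ c) (A : Finset ℕ) :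
    rectSum f A (Ioc a c) = rectSum f A (Ioc a b) + rectSum f A (Ioc b c) := by
  simp only [rectSum, ← sum_add_distrib]
  exact sum_congr rfl fun i _ => (sum_Ioc_consecutive _ hab hbc).symm

/-! ### Two-parameter chaining -/

/-- The centred sum of a nonnegative increment `T₁ - T₀` over a subrectangle is controlled by the
centred sums over the surrounding rectangle, up to the total mean: below because the increment is
nonnegative, above because its sums increase with the rectangle. -/
lemma abs_increment_le {T₀ T₁ μ₀ μ₁ : ℕ → ℕ → ℝ} {A A' B B' : Finset ℕ} {c e N : ℝ}
    (hA : A ⊆ A') (hB : B ⊆ B') (he : 0 ≤ e)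
    (hT : ∀ i ∈ A', ∀ j ∈ B', T₀ i j ≤ T₁ i j)
    (hμ : ∀ i ∈ A', ∀ j ∈ B', μ₀ i j ≤ μ₁ i j)
    (hμe : ∀ i ∈ A', ∀ j ∈ B', μ₁ i j - μ₀ i j ≤ e)
    (hN : (A'.card : ℝ) * B'.card ≤ N)
    (h₀ : |rectSum (fun i j => T₀ i j - μ₀ i j) A' B'| ≤ c)
    (h₁ : |rectSum (fun i j => T₁ i j - μ₁ i j) A' B'| ≤ c) :
    |rectSum (fun i j => T₁ i j - μ₁ i j) A B - rectSum (fun i j => T₀ i j - μ₀ i j) A B|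
      ≤ 2 * c + N * e := by
  rw [rectSum_sub] at h₀ h₁ ⊢
  rw [rectSum_sub]
  have hY : ∀ i ∈ A', ∀ j ∈ B', 0 ≤ T₁ i j - T₀ i j := fun i hi j hj => sub_nonneg.2 (hT i hi j hj)
  have hM : ∀ i ∈ A', ∀ j ∈ B', 0 ≤ μ₁ i j - μ₀ i j := fun i hi j hj => sub_nonneg.2 (hμ i hi j hj)
  have y1 := rectSum_subset hA hB hY
  have y0 := rectSum_nonneg (A := A) (B := B) fun i hi j hj => hY i (hA hi) j (hB hj)
  have m1 := rectSum_subset hA hB hM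
  have m0 := rectSum_nonneg (A := A) (B := B) fun i hi j hj => hM i (hA hi) j (hB hj)
  have m2 : rectSum (fun i j => μ₁ i j - μ₀ i j) A' B' ≤ N * e := by
    refine (rectSum_mono (g := fun _ _ => e) hμe).trans ?_
    simp only [rectSum, sum_const, nsmul_eq_mul]
    rw [← mul_assoc]
    exact mul_le_mul_of_nonneg_right hN he
  simp only [rectSum_sub] at y1 y0 m1 m0 m2
  rw [abs_le] at h₀ h₁ ⊢
  constructor <;> linarith [h₀.1, h₀.2, h₁.1, h₁.2]

/-- One term of the chaining: the mixed difference over the scales `(r + 1, r' + 1)` of the sums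
over the rectangles above the dyadic floors of `(u, v)`. -/
lemma abs_chain_step_le {T μ : ℕ → ℕ → ℕ → ℝ} {m n r r' u v : ℕ} {c e : ℝ}
    (hr : r < m) (hr' : r' < n) (hu : u < 2 ^ m) (hv : v < 2 ^ n) (he : 0 ≤ e)
    (hT : ∀ k, ∀ i ∈ Icc 1 (2 ^ m - 1), ∀ j ∈ Icc 1 (2 ^ n - 1), T k i j ≤ T (k + 1) i j)
    (hμ : ∀ k, ∀ i ∈ Icc 1 (2 ^ m - 1), ∀ j ∈ Icc 1 (2 ^ n - 1), μ k i j ≤ μ (k + 1) i j)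
    (hμe : ∀ d ∈ range 2, ∀ i ∈ Icc 1 (2 ^ m - 1), ∀ j ∈ Icc 1 (2 ^ n - 1),
      μ (r + r' + d + 1) i j - μ (r + r' + d) i j ≤ e)
    (hb : ∀ d ∈ range 3, ∀ p ∈ range (2 ^ (m - r)), ∀ p' ∈ range (2 ^ (n - r')),
      |rectSum (fun i j => T (r + r' + d) i j - μ (r + r' + d) i j)
        (dyadicBlock m r p) (dyadicBlock n r' p')| ≤ c) (D : ℕ → ℕ → ℝ)
    (hD : ∀ s t, D s t = rectSum (fun i j => T (s + t) i j - μ (s + t) i j)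
      (Ioc (dyadicFloor s u) u) (Ioc (dyadicFloor t v) v)) :
    |D (r + 1) (r' + 1) - D r (r' + 1) - (D (r + 1) r' - D r r')|
      ≤ 9 * c + 4 * (2 ^ (r + r') * e) := by
  obtain ⟨p, hp, hA⟩ := digit_block hr hu
  obtain ⟨p₁, hp₁, hA'⟩ := tail_subset_block hr hu
  obtain ⟨p', hp', hB⟩ := digit_block hr' hv
  obtain ⟨p₁', hp₁', hB'⟩ := tail_subset_block hr' hv
  have hk2 : r + 1 + (r' + 1) = r + r' + 2 := by ring
  have hk1 : r + (r' + 1) = r + r' + 1 := by ring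
  have hk1' : r + 1 + r' = r + r' + 1 := by ring
  simp only [hD, hk2, hk1, hk1']
  have ua := dyadicFloor_succ_le r u
  have ub := dyadicFloor_le r u
  have va := dyadicFloor_succ_le r' v
  have vb := dyadicFloor_le r' v
  simp only [rectSum_split_left _ ua ub, rectSum_split_right _ va vb]
  set A := Ioc (dyadicFloor (r + 1) u) (dyadicFloor r u)
  set A' := Ioc (dyadicFloor r u) u
  set B := Ioc (dyadicFloor (r' + 1) v) (dyadicFloor r' v)
  set B' := Ioc (dyadicFloor r' v) v
  have hc : 0 ≤ c := (abs_nonneg _).trans (hb 0 (by simp) p hp p' hp')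
  have hAs : A ⊆ dyadicBlock m r p := by
    rcases hA with h | h
    · rw [h]; exact empty_subset _
    · rw [h]
  have hBs : B ⊆ dyadicBlock n r' p' := by
    rcases hB with h | h
    · rw [h]; exact empty_subset _
    · rw [h]
  have key : ∀ d ∈ range 2, ∀ x ∈ range (2 ^ (m - r)), ∀ y ∈ range (2 ^ (n - r')),
      ∀ E F : Finset ℕ, E ⊆ dyadicBlock m r x → F ⊆ dyadicBlock n r' y →
      |rectSum (fun i j => T (r + r' + d + 1) i j - μ (r + r' + d + 1) i j) E F
        - rectSum (fun i j => T (r + r' + d) i j - μ (r + r' + d) i j) E F|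
      ≤ 2 * c + 2 ^ (r + r') * e := by
    intro d hd x hx y hy E F hE hF
    have sx := dyadicBlock_subset m r x
    have sy := dyadicBlock_subset n r' y
    rw [mem_range] at hd
    refine abs_increment_le hE hF he (fun i hi j hj => hT _ i (sx hi) j (sy hj))
      (fun i hi j hj => hμ _ i (sx hi) j (sy hj))
      (fun i hi j hj => hμe d (mem_range.2 hd) i (sx hi) j (sy hj)) ?_
      (hb d (mem_range.2 (by omega)) x hx y hy)
      (hb (d + 1) (mem_range.2 (by omega)) x hx y hy)
    rw [pow_add]
    exact_mod_cast Nat.mul_le_mul (card_dyadicBlock_le m r x) (card_dyadicBlock_le n r' y)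
  have t0 : |rectSum (fun i j => T (r + r' + 2) i j - μ (r + r' + 2) i j) A B| ≤ c := by
    rcases hA with h | h
    · simpa [h, rectSum] using hc
    rcases hB with h' | h'
    · simpa [h', rectSum] using hc
    rw [h, h']
    exact hb 2 (by simp) p hp p' hp'
  have t1 := key 1 (by simp) p₁ hp₁ p' hp' A' B hA' hBs
  have t2 := key 1 (by simp) p hp p₁' hp₁' A B' hAs hB'
  have t3 := key 1 (by simp) p₁ hp₁ p₁' hp₁' A' B' hA' hB'
  have t4 := key 0 (by simp) p₁ hp₁ p₁' hp₁' A' B' hA' hB'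
  simp only [show r + r' + 1 + 1 = r + r' + 2 from rfl, add_zero] at t1 t2 t3 t4
  rw [abs_le] at *
  constructor <;> linarith [t0.1, t0.2, t1.1, t1.2, t2.1, t2.2, t3.1, t3.2, t4.1, t4.2]

/-- Two-parameter chaining: control of all block sums at all scales controls every sum over an
initial rectangle. -/
lemma abs_rectSum_le {T μ : ℕ → ℕ → ℕ → ℝ} {m n u v : ℕ} {c e : ℕ → ℕ → ℝ}
    (hu : u < 2 ^ m) (hv : v < 2 ^ n) (he : ∀ r r', 0 ≤ e r r')
    (hT : ∀ k, ∀ i ∈ Icc 1 (2 ^ m - 1), ∀ j ∈ Icc 1 (2 ^ n - 1), T k i j ≤ T (k + 1) i j)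
    (hμ : ∀ k, ∀ i ∈ Icc 1 (2 ^ m - 1), ∀ j ∈ Icc 1 (2 ^ n - 1), μ k i j ≤ μ (k + 1) i j)
    (hμe : ∀ r < m, ∀ r' < n, ∀ d ∈ range 2, ∀ i ∈ Icc 1 (2 ^ m - 1), ∀ j ∈ Icc 1 (2 ^ n - 1),
      μ (r + r' + d + 1) i j - μ (r + r' + d) i j ≤ e r r')
    (hb : ∀ r < m, ∀ r' < n, ∀ d ∈ range 3,
      ∀ p ∈ range (2 ^ (m - r)), ∀ p' ∈ range (2 ^ (n - r')),
      |rectSum (fun i j => T (r + r' + d) i j - μ (r + r' + d) i j)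
        (dyadicBlock m r p) (dyadicBlock n r' p')| ≤ c r r') :
    |rectSum (fun i j => T (m + n) i j - μ (m + n) i j) (Icc 1 u) (Icc 1 v)|
      ≤ ∑ r ∈ range m, ∑ r' ∈ range n, (9 * c r r' + 4 * (2 ^ (r + r') * e r r')) := by
  obtain ⟨D, hD⟩ : ∃ D : ℕ → ℕ → ℝ, ∀ s t, D s t =
      rectSum (fun i j => T (s + t) i j - μ (s + t) i j)
      (Ioc (dyadicFloor s u) u) (Ioc (dyadicFloor t v) v) := ⟨_, fun _ _ => rfl⟩
  have f0 : ∀ w, dyadicFloor 0 w = w := fun w => by simp [dyadicFloor]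
  have hDmn : rectSum (fun i j => T (m + n) i j - μ (m + n) i j) (Icc 1 u) (Icc 1 v) = D m n := by
    rw [hD, dyadicFloor, dyadicFloor, Nat.div_eq_of_lt hu, Nat.div_eq_of_lt hv]
    rfl
  have hsum : ∑ r ∈ range m, ∑ r' ∈ range n,
      (D (r + 1) (r' + 1) - D r (r' + 1) - (D (r + 1) r' - D r r')) = D m n := by
    have h1 : ∀ r, ∑ r' ∈ range n,
        (D (r + 1) (r' + 1) - D r (r' + 1) - (D (r + 1) r' - D r r')) = D (r + 1) n - D r n := by
      intro r
      rw [sum_range_sub (fun t => D (r + 1) t - D r t)]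
      simp [hD, f0, rectSum]
    simp only [h1]
    rw [sum_range_sub (fun s => D s n)]
    simp [hD, f0, rectSum]
  rw [hDmn, ← hsum]
  refine (abs_sum_le_sum_abs _ _).trans (sum_le_sum fun r hr => ?_)
  refine (abs_sum_le_sum_abs _ _).trans (sum_le_sum fun r' hr' => ?_)
  rw [mem_range] at hr hr'
  exact abs_chain_step_le hr hr' hu hv (he r r') hT hμ (hμe r hr r' hr') (hb r hr r' hr') D hD

/-! ### Truncated variables: means, moments and tails -/

section Truncation

variable {Ω : Type*} {X : ℕ → ℕ → Ω → ℝ} {b : ℕ → ℝ}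

lemma truncUp_eq_min (k i j : ℕ) (ω : Ω) : truncUp X b k i j ω = min (X i j ω) (b (2 ^ k)) :=
  (min_def _ _).symm

lemma truncUp_nonneg (hbp : ∀ n : ℕ, 1 ≤ n → 0 < b n) {i j : ℕ} (hX : ∀ ω, 0 ≤ X i j ω)
    (k : ℕ) (ω : Ω) : 0 ≤ truncUp X b k i j ω := by
  rw [truncUp_eq_min]
  exact le_min (hX ω) (hbp _ Nat.one_le_two_pow).le

lemma truncUp_le (k i j : ℕ) (ω : Ω) : truncUp X b k i j ω ≤ b (2 ^ k) := by
  rw [truncUp_eq_min]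
  exact min_le_right _ _

lemma truncUp_mono (hbm : Monotone b) {k K : ℕ} (hk : k ≤ K) (i j : ℕ) (ω : Ω) :
    truncUp X b k i j ω ≤ truncUp X b K i j ω := by
  rw [truncUp_eq_min, truncUp_eq_min]
  exact min_le_min le_rfl (hbm (Nat.pow_le_pow_right two_pos hk))

lemma abs_truncUp_le (hbp : ∀ n : ℕ, 1 ≤ n → 0 < b n) {i j : ℕ} (hX : ∀ ω, 0 ≤ X i j ω)
    (k : ℕ) (ω : Ω) : |truncUp X b k i j ω| ≤ b (2 ^ k) := by
  rw [abs_of_nonneg (truncUp_nonneg hbp hX k ω)]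
  exact truncUp_le k i j ω

variable [MeasureSpace Ω]

lemma measurable_truncUp {i j : ℕ} (hX : Measurable (X i j)) (k : ℕ) :
    Measurable (truncUp X b k i j) := by
  have : truncUp X b k i j = fun ω => min (X i j ω) (b (2 ^ k)) :=
    funext fun ω => truncUp_eq_min k i j ω
  rw [this]
  exact hX.min measurable_const

lemma measurable_rectSum_trunc {M N : ℕ} {A B : Finset ℕ} (hA : A ⊆ Icc 1 M) (hB : B ⊆ Icc 1 N)
    (hm : ∀ i j : ℕ, 1 ≤ i → 1 ≤ j → Measurable (X i j)) (k : ℕ) :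
    Measurable fun ω =>
      rectSum (fun i j => truncUp X b k i j ω - ∫ ω', truncUp X b k i j ω') A B := by
  unfold rectSum
  refine Finset.measurable_fun_sum _ fun i hi => Finset.measurable_fun_sum _ fun j hj => ?_
  exact (measurable_truncUp (hm i j (mem_Icc.1 (hA hi)).1 (mem_Icc.1 (hB hj)).1) k).sub_const _

variable [IsProbabilityMeasure (volume : Measure Ω)]

lemma integrable_truncUp (hbp : ∀ n : ℕ, 1 ≤ n → 0 < b n) {i j : ℕ} (hX : ∀ ω, 0 ≤ X i j ω)
    (hm : Measurable (X i j)) (k : ℕ) : Integrable (truncUp X b k i j) :=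
  Integrable.of_bound (measurable_truncUp hm k).aestronglyMeasurable (b (2 ^ k))
    (Eventually.of_forall fun ω => abs_truncUp_le hbp hX k ω)

lemma integrable_truncUp_rpow {p : ℝ} (hp : 0 ≤ p) (hbp : ∀ n : ℕ, 1 ≤ n → 0 < b n) {i j : ℕ}
    (hX : ∀ ω, 0 ≤ X i j ω) (hm : Measurable (X i j)) (k : ℕ) :
    Integrable fun ω => truncUp X b k i j ω ^ p := by
  refine Integrable.of_bound ((measurable_truncUp hm k).pow_const p).aestronglyMeasurable
    (b (2 ^ k) ^ p) (Eventually.of_forall fun ω => ?_)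
  have h0 := truncUp_nonneg hbp hX k ω
  rw [Real.norm_of_nonneg (Real.rpow_nonneg h0 p)]
  exact Real.rpow_le_rpow h0 (truncUp_le k i j ω) hp

lemma integrable_truncUp_sq (hbp : ∀ n : ℕ, 1 ≤ n → 0 < b n) {i j : ℕ}
    (hX : ∀ ω, 0 ≤ X i j ω) (hm : Measurable (X i j)) (k : ℕ) :
    Integrable fun ω => truncUp X b k i j ω ^ 2 := by
  have := integrable_truncUp_rpow (p := 2) zero_le_two hbp hX hm k
  simpa only [Real.rpow_two] using this

lemma integral_truncUp_mono (hbm : Monotone b) (hbp : ∀ n : ℕ, 1 ≤ n → 0 < b n) {i j : ℕ}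
    (hX : ∀ ω, 0 ≤ X i j ω) (hm : Measurable (X i j)) {k K : ℕ} (hk : k ≤ K) :
    ∫ ω, truncUp X b k i j ω ≤ ∫ ω, truncUp X b K i j ω :=
  integral_mono (integrable_truncUp hbp hX hm k) (integrable_truncUp hbp hX hm K)
    fun ω => truncUp_mono hbm hk i j ω

/-- The mean increment between two truncation levels, bounded through
`min(x, b') - min(x, b) ≤ b' 1(x > b)`. -/
lemma integral_truncUp_succ_sub_le (hbp : ∀ n : ℕ, 1 ≤ n → 0 < b n) {i j : ℕ}
    (hX : ∀ ω, 0 ≤ X i j ω) (hm : Measurable (X i j)) (k : ℕ) :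
    (∫ ω, truncUp X b (k + 1) i j ω) - ∫ ω, truncUp X b k i j ω ≤
      b (2 ^ (k + 1)) * (volume {ω | b (2 ^ k) < X i j ω}).toReal := by
  have hS : MeasurableSet {ω | b (2 ^ k) < X i j ω} := measurableSet_lt measurable_const hm
  rw [← integral_sub (integrable_truncUp hbp hX hm (k + 1)) (integrable_truncUp hbp hX hm k)]
  have hint : ∫ ω, {ω | b (2 ^ k) < X i j ω}.indicator (fun _ => b (2 ^ (k + 1))) ω =
      b (2 ^ (k + 1)) * (volume {ω | b (2 ^ k) < X i j ω}).toReal := by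
    rw [integral_indicator_const _ hS, smul_eq_mul, mul_comm]
    rfl
  rw [← hint]
  refine integral_mono
    ((integrable_truncUp hbp hX hm (k + 1)).sub (integrable_truncUp hbp hX hm k))
    ((integrable_const _).indicator hS) fun ω => ?_
  by_cases h : b (2 ^ k) < X i j ω
  · have h1 := truncUp_le (X := X) (b := b) (k + 1) i j ω
    have h2 := truncUp_nonneg hbp hX k ω
    simp only [Set.indicator, Set.mem_ofPred_eq, h, if_true]
    linarith
  · simp only [Set.indicator, Set.mem_ofPred_eq, h, if_false, truncUp_eq_min]
    rw [min_eq_left (not_lt.1 h)]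
    linarith [min_le_left (X i j ω) (b (2 ^ (k + 1)))]

lemma integral_truncUp_le (hbp : ∀ n : ℕ, 1 ≤ n → 0 < b n) {i j : ℕ}
    (hX : ∀ ω, 0 ≤ X i j ω) (hm : Measurable (X i j)) (hi : Integrable (X i j)) (k : ℕ) :
    ∫ ω, truncUp X b k i j ω ≤ ∫ ω, X i j ω :=
  integral_mono (integrable_truncUp hbp hX hm k) hi fun ω => by
    simp only [truncUp_eq_min, min_le_left]

lemma integral_sub_truncUp_le (hbp : ∀ n : ℕ, 1 ≤ n → 0 < b n) {i j : ℕ}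
    (hX : ∀ ω, 0 ≤ X i j ω) (hm : Measurable (X i j)) (hi : Integrable (X i j)) (k : ℕ) :
    (∫ ω, X i j ω) - ∫ ω, truncUp X b k i j ω ≤
      ∫ ω, (if b (2 ^ k) < X i j ω then X i j ω else 0) := by
  have hS : MeasurableSet {ω | b (2 ^ k) < X i j ω} := measurableSet_lt measurable_const hm
  rw [← integral_sub hi (integrable_truncUp hbp hX hm k)]
  refine integral_mono (hi.sub (integrable_truncUp hbp hX hm k)) (hi.indicator hS) fun ω => ?_
  have h2 := truncUp_nonneg hbp hX k ω
  by_cases h : b (2 ^ k) < X i j ω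
  · simp only [h, if_true]
    linarith
  · simp only [h, if_false, truncUp_eq_min]
    rw [min_eq_left (not_lt.1 h), sub_self]

lemma integrable_rectSum_trunc {q : ℝ} (hq : 1 ≤ q) {M N : ℕ} {A B : Finset ℕ}
    (hA : A ⊆ Icc 1 M) (hB : B ⊆ Icc 1 N)
    (hm : ∀ i j : ℕ, 1 ≤ i → 1 ≤ j → Measurable (X i j))
    (hX : ∀ i j : ℕ, 1 ≤ i → 1 ≤ j → ∀ ω, 0 ≤ X i j ω)
    (hbp : ∀ n : ℕ, 1 ≤ n → 0 < b n) (k : ℕ) :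
    Integrable fun ω =>
      |rectSum (fun i j => truncUp X b k i j ω - ∫ ω', truncUp X b k i j ω') A B| ^ (2 * q) := by
  refine Integrable.of_bound
    (((measurable_rectSum_trunc hA hB hm k).norm).pow_const _).aestronglyMeasurable
    ((∑ i ∈ A, ∑ j ∈ B, (b (2 ^ k) + |∫ ω', truncUp X b k i j ω'|)) ^ (2 * q))
    (Eventually.of_forall fun ω => ?_)
  rw [Real.norm_of_nonneg (Real.rpow_nonneg (abs_nonneg _) _)]
  refine Real.rpow_le_rpow (abs_nonneg _) ?_ (by linarith)
  refine (abs_sum_le_sum_abs _ _).trans (sum_le_sum fun i hi => ?_)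
  refine (abs_sum_le_sum_abs _ _).trans (sum_le_sum fun j hj => ?_)
  refine (abs_sub _ _).trans (add_le_add_left ?_ _)
  exact abs_truncUp_le hbp (hX i j (mem_Icc.1 (hA hi)).1 (mem_Icc.1 (hB hj)).1) k ω

/-- Condition (H_{2q}) applied to the truncations `min(·, b_{2^k})` over a rectangle; the negative
part of the constant is discarded so that the bound is monotone in the moments. -/
lemma rectSum_moment_le {q C₀ : ℝ} (hq : 1 ≤ q) {M N : ℕ} {A B : Finset ℕ}
    (hA : A ⊆ Icc 1 M) (hB : B ⊆ Icc 1 N)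
    (hm : ∀ i j : ℕ, 1 ≤ i → 1 ≤ j → Measurable (X i j))
    (hX : ∀ i j : ℕ, 1 ≤ i → 1 ≤ j → ∀ ω, 0 ≤ X i j ω)
    (hH : CondHWith q C₀ (fun k : PIdx => X k.1.1 k.1.2))
    (hbm : Monotone b) (hbp : ∀ n : ℕ, 1 ≤ n → 0 < b n) {k K L : ℕ} (hk : k ≤ K)
    (hL : A.card * B.card ≤ L) :
    ∫ ω, |rectSum (fun i j => truncUp X b k i j ω - ∫ ω', truncUp X b k i j ω') A B| ^ (2 * q) ≤
      max C₀ 0 * (L * maxNN M N (fun i j => ∫ ω, truncUp X b K i j ω ^ (2 * q)) +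
        (L : ℝ) ^ q * maxNN M N (fun i j => (∫ ω, truncUp X b K i j ω ^ 2) ^ q)) := by
  have hq0 : 0 ≤ q := by linarith
  set E₁ := maxNN M N (fun i j => ∫ ω, truncUp X b K i j ω ^ (2 * q)) with hE₁
  set E₂ := maxNN M N (fun i j => (∫ ω, truncUp X b K i j ω ^ 2) ^ q) with hE₂
  have hE₁0 : 0 ≤ E₁ := maxNN_nonneg _ _ _
  have hE₂0 : 0 ≤ E₂ := maxNN_nonneg _ _ _
  have hC0 : 0 ≤ max C₀ 0 := le_max_right _ _
  set I : Finset PIdx := (A ×ˢ B).subtype (fun k : ℕ × ℕ => 1 ≤ k.1 ∧ 1 ≤ k.2) with hIdef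
  have hpos : ∀ x ∈ A ×ˢ B, 1 ≤ x.1 ∧ 1 ≤ x.2 := fun x hx =>
    ⟨(mem_Icc.1 (hA (mem_product.1 hx).1)).1, (mem_Icc.1 (hB (mem_product.1 hx).2)).1⟩
  have hsum : ∀ g : ℕ → ℕ → ℝ, rectSum g A B = ∑ l ∈ I, g l.1.1 l.1.2 := by
    intro g
    rw [rectSum, ← sum_product', hIdef,
      Finset.sum_subtype_of_mem (fun x : ℕ × ℕ => g x.1 x.2) hpos]
  have hcard : (I.card : ℝ) ≤ L := by
    have : I.card ≤ (A ×ˢ B).card := by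
      rw [hIdef, card_subtype]
      exact card_filter_le _ _
    rw [card_product] at this
    exact_mod_cast this.trans hL
  have hmem : ∀ l ∈ I, l.1.1 ∈ Icc 1 M ∧ l.1.2 ∈ Icc 1 N := by
    intro l hl
    have := mem_product.1 (mem_subtype.1 hl)
    exact ⟨hA this.1, hB this.2⟩
  rcases I.eq_empty_or_nonempty with hI | hI
  · simp only [hsum, hI, sum_empty, abs_zero]
    rw [Real.zero_rpow (by linarith), integral_zero]
    positivity
  simp only [hsum]
  have hint := integrable_rectSum_trunc hq hA hB hm hX hbp k
  simp only [hsum] at hint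
  have key := hH I hI (fun _ x => min x (b (2 ^ k)))
    (fun l _ x y hxy => min_le_min hxy le_rfl)
  simp only [← truncUp_eq_min] at key
  have habs : ∀ l : PIdx, ∀ ω, |truncUp X b k l.1.1 l.1.2 ω| = truncUp X b k l.1.1 l.1.2 ω :=
    fun l ω => abs_of_nonneg (truncUp_nonneg hbp (hX _ _ l.2.1 l.2.2) k ω)
  simp only [habs] at key
  refine (key (fun l _ => integrable_truncUp hbp (hX _ _ l.2.1 l.2.2) (hm _ _ l.2.1 l.2.2) k)
    (fun l _ => integrable_truncUp_sq hbp (hX _ _ l.2.1 l.2.2) (hm _ _ l.2.1 l.2.2) k)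
    (fun l _ => integrable_truncUp_rpow (by linarith) hbp (hX _ _ l.2.1 l.2.2)
      (hm _ _ l.2.1 l.2.2) k) hint).trans ?_
  have s₁ : I.sup' hI (fun l => ∫ ω, truncUp X b k l.1.1 l.1.2 ω ^ (2 * q)) ≤ E₁ := by
    refine sup'_le _ _ fun l hl => le_trans ?_
      (le_maxNN (g := fun i j => ∫ ω, truncUp X b K i j ω ^ (2 * q)) (hmem l hl).1 (hmem l hl).2)
    refine integral_mono (integrable_truncUp_rpow (by linarith) hbp (hX _ _ l.2.1 l.2.2)
      (hm _ _ l.2.1 l.2.2) k) (integrable_truncUp_rpow (by linarith) hbp (hX _ _ l.2.1 l.2.2)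
      (hm _ _ l.2.1 l.2.2) K) fun ω => ?_
    exact Real.rpow_le_rpow (truncUp_nonneg hbp (hX _ _ l.2.1 l.2.2) k ω)
      (truncUp_mono hbm hk _ _ ω) (by linarith)
  have s₂ : I.sup' hI (fun l => (∫ ω, truncUp X b k l.1.1 l.1.2 ω ^ 2) ^ q) ≤ E₂ := by
    refine sup'_le _ _ fun l hl => le_trans ?_
      (le_maxNN (g := fun i j => (∫ ω, truncUp X b K i j ω ^ 2) ^ q) (hmem l hl).1 (hmem l hl).2)
    refine Real.rpow_le_rpow (integral_nonneg fun ω => sq_nonneg _) ?_ hq0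
    refine integral_mono (integrable_truncUp_sq hbp (hX _ _ l.2.1 l.2.2)
      (hm _ _ l.2.1 l.2.2) k) (integrable_truncUp_sq hbp (hX _ _ l.2.1 l.2.2)
      (hm _ _ l.2.1 l.2.2) K) fun ω => ?_
    exact pow_le_pow_left₀ (truncUp_nonneg hbp (hX _ _ l.2.1 l.2.2) k ω)
      (truncUp_mono hbm hk _ _ ω) 2
  obtain ⟨l₀, hl₀⟩ := hI
  have n₁ : 0 ≤ I.sup' ⟨l₀, hl₀⟩ (fun l => ∫ ω, truncUp X b k l.1.1 l.1.2 ω ^ (2 * q)) :=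
    le_trans (integral_nonneg fun ω =>
      Real.rpow_nonneg (truncUp_nonneg hbp (hX _ _ l₀.2.1 l₀.2.2) k ω) _)
      (le_sup' (fun l : PIdx => ∫ ω, truncUp X b k l.1.1 l.1.2 ω ^ (2 * q)) hl₀)
  have n₂ : 0 ≤ I.sup' ⟨l₀, hl₀⟩ (fun l => (∫ ω, truncUp X b k l.1.1 l.1.2 ω ^ 2) ^ q) :=
    le_trans (Real.rpow_nonneg (integral_nonneg fun ω => sq_nonneg _) _)
      (le_sup' (fun l : PIdx => (∫ ω, truncUp X b k l.1.1 l.1.2 ω ^ 2) ^ q) hl₀)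
  have hcq : (I.card : ℝ) ^ q ≤ (L : ℝ) ^ q := Real.rpow_le_rpow (by positivity) hcard hq0
  have hcq0 : 0 ≤ (I.card : ℝ) ^ q := by positivity
  refine mul_le_mul (le_max_left _ _) ?_ (by positivity) hC0
  exact add_le_add (mul_le_mul hcard s₁ n₁ (by positivity)) (mul_le_mul hcq s₂ n₂ (by positivity))

/-- Markov's inequality for the `2q`-th moment of a centred truncated sum. -/
lemma rectSum_tail_le {q C₀ : ℝ} (hq : 1 ≤ q) {M N : ℕ} {A B : Finset ℕ}
    (hA : A ⊆ Icc 1 M) (hB : B ⊆ Icc 1 N)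
    (hm : ∀ i j : ℕ, 1 ≤ i → 1 ≤ j → Measurable (X i j))
    (hX : ∀ i j : ℕ, 1 ≤ i → 1 ≤ j → ∀ ω, 0 ≤ X i j ω)
    (hH : CondHWith q C₀ (fun k : PIdx => X k.1.1 k.1.2))
    (hbm : Monotone b) (hbp : ∀ n : ℕ, 1 ≤ n → 0 < b n) {k K L : ℕ} (hk : k ≤ K)
    (hL : A.card * B.card ≤ L) {δ : ℝ} (hδ : 0 < δ) :
    volume.real {ω | δ ≤
        |rectSum (fun i j => truncUp X b k i j ω - ∫ ω', truncUp X b k i j ω') A B|} ≤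
      δ ^ (-(2 * q)) *
      (max C₀ 0 * (L * maxNN M N (fun i j => ∫ ω, truncUp X b K i j ω ^ (2 * q)) +
        (L : ℝ) ^ q * maxNN M N (fun i j => (∫ ω, truncUp X b K i j ω ^ 2) ^ q))) := by
  have h := mul_meas_ge_le_integral_of_nonneg
    (Eventually.of_forall fun ω => Real.rpow_nonneg (abs_nonneg _) _)
    (integrable_rectSum_trunc hq hA hB hm hX hbp k) (δ ^ (2 * q))
  have hset : ∀ ω, (δ ^ (2 * q) ≤ |rectSum (fun i j =>
      truncUp X b k i j ω - ∫ ω', truncUp X b k i j ω') A B| ^ (2 * q)) ↔ δ ≤ |rectSum (fun i j =>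
      truncUp X b k i j ω - ∫ ω', truncUp X b k i j ω') A B| := fun ω =>
    Real.rpow_le_rpow_iff hδ.le (abs_nonneg _) (by linarith)
  simp only [hset] at h
  have h2 := h.trans (rectSum_moment_le hq hA hB hm hX hH hbm hbp hk hL)
  have hp : 0 < δ ^ (2 * q) := Real.rpow_pos_of_pos hδ _
  rw [Real.rpow_neg hδ.le, inv_mul_eq_div, le_div_iff₀ hp, mul_comm]
  exact h2

end Truncation

lemma sum_Icc_one_eq (m : ℕ) (f : ℕ → ℝ) : ∑ s ∈ Icc 1 m, f s = ∑ r ∈ range m, f (r + 1) := by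
  induction m with
  | zero => simp
  | succ k ih => rw [sum_range_succ, ← ih, sum_Icc_succ_top (by omega)]

/-! ### The maximal inequality -/

/-- Maximal inequality for the tail probability of the maximum of double sums of
nonnegative integrable dependent random variables: with a constant depending only
on `q` (and on the constant in Condition (H_{2q})), under the two smallness
conditions the tail probability of the maximum of the centered double sums is
bounded by the sum of the tail probabilities plus a Rosenthal-type moment term. -/
theorem maximal_inequality_tail_probability
    (q C₀ : ℝ) (hq : 1 ≤ q) :
    ∃ C : ℝ, ∀ (Ω : Type) [MeasureSpace Ω] [IsProbabilityMeasure (volume : Measure Ω)],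
      ∀ X : ℕ → ℕ → Ω → ℝ,
      (∀ i j : ℕ, 1 ≤ i → 1 ≤ j → Measurable (X i j)) →
      (∀ i j : ℕ, 1 ≤ i → 1 ≤ j → ∀ ω, 0 ≤ X i j ω) →
      (∀ i j : ℕ, 1 ≤ i → 1 ≤ j → Integrable (X i j)) →
      CondHWith q C₀ (fun k : PIdx => X k.1.1 k.1.2) →
      ∀ b : ℕ → ℝ, Monotone b → (∀ n : ℕ, 1 ≤ n → 0 < b n) →
      ∀ lam : ℕ → ℕ → ℕ → ℕ → ℝ,
      (∀ m n i j : ℕ, 1 ≤ i → i ≤ m → 1 ≤ j → j ≤ n → 0 < lam m n i j) →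
      ∀ ε : ℝ, 0 < ε → ∀ m n : ℕ, 1 ≤ m → 1 ≤ n →
      (∑ i ∈ Finset.Icc 1 (2 ^ m), ∑ j ∈ Finset.Icc 1 (2 ^ n),
          ∫ ω, (if b (2 ^ (m + n)) < X i j ω then X i j ω else 0) ≤
        ε * ∑ i ∈ Finset.Icc 1 m, ∑ j ∈ Finset.Icc 1 n, lam m n i j) →
      (6 * ∑ s ∈ Finset.Icc 1 m, ∑ t ∈ Finset.Icc 1 n,
          (2 : ℝ) ^ (s + t) * b (2 ^ (s + t)) *
            maxNN (2 ^ m - 1) (2 ^ n - 1)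
              (fun i j => (volume {ω | b (2 ^ (s + t - 2)) < X i j ω}).toReal) ≤
        ε * ∑ i ∈ Finset.Icc 1 m, ∑ j ∈ Finset.Icc 1 n, lam m n i j) →
      (volume {ω | 3 * (∑ i ∈ Finset.Icc 1 m, ∑ j ∈ Finset.Icc 1 n, lam m n i j) * ε ≤
          maxDS (fun i j => X i j ω - ∫ ω', X i j ω') (2 ^ m - 1) (2 ^ n - 1)}).toReal ≤
        (∑ i ∈ Finset.Icc 1 (2 ^ m), ∑ j ∈ Finset.Icc 1 (2 ^ n),
          (volume {ω | b (2 ^ (m + n)) < X i j ω}).toReal) +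
        C * ε ^ (-(2 * q)) *
          ∑ s ∈ Finset.Icc 1 m, ∑ t ∈ Finset.Icc 1 n,
            (2 : ℝ) ^ (m + n) * lam m n s t ^ (-(2 * q)) *
              (maxNN (2 ^ m - 1) (2 ^ n - 1)
                  (fun i j => ∫ ω, truncUp X b (s + t) i j ω ^ (2 * q)) +
                (2 : ℝ) ^ (((s + t : ℕ) : ℝ) * (q - 1)) *
                  maxNN (2 ^ m - 1) (2 ^ n - 1)
                    (fun i j => (∫ ω, truncUp X b (s + t) i j ω ^ 2) ^ q)) := by
  -- the factor 3 counts the truncation levels per scale; block sums are cut at `lam * ε / 9`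
  refine ⟨3 * 9 ^ (2 * q) * max C₀ 0, ?_⟩
  intro Ω _ _ X hm hX hi hH b hbm hbp lam hlam ε hε m n hm1 hn1 ha hb
  set a : ℝ := ∑ i ∈ Finset.Icc 1 m, ∑ j ∈ Finset.Icc 1 n, lam m n i j with hadef
  have ha0 : 0 < a := by
    refine sum_pos (fun i hi => sum_pos (fun j hj => ?_) ⟨1, mem_Icc.2 ⟨le_rfl, hn1⟩⟩)
      ⟨1, mem_Icc.2 ⟨le_rfl, hm1⟩⟩
    rw [mem_Icc] at hi hj
    exact hlam m n i j hi.1 hi.2 hj.1 hj.2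
  obtain ⟨Z, hZ⟩ : ∃ Z : ℕ → Finset ℕ → Finset ℕ → Ω → ℝ, ∀ k A B ω, Z k A B ω =
    rectSum (fun i j => truncUp X b k i j ω - ∫ ω', truncUp X b k i j ω') A B :=
    ⟨_, fun _ _ _ _ => rfl⟩
  obtain ⟨δ, hδ⟩ : ∃ δ : ℕ → ℕ → ℝ, ∀ r r', δ r r' = lam m n (r + 1) (r' + 1) * ε / 9 :=
    ⟨_, fun _ _ => rfl⟩
  have hδ0 : ∀ r < m, ∀ r' < n, 0 < δ r r' := by
    intro r hr r' hr'
    have := hlam m n (r + 1) (r' + 1) (by omega) (by omega) (by omega) (by omega)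
    rw [hδ]
    positivity
  have incl : {ω | 3 * a * ε ≤
      maxDS (fun i j => X i j ω - ∫ ω', X i j ω') (2 ^ m - 1) (2 ^ n - 1)} ⊆
      (⋃ i ∈ Icc 1 (2 ^ m), ⋃ j ∈ Icc 1 (2 ^ n), {ω | b (2 ^ (m + n)) < X i j ω}) ∪
      ⋃ r ∈ range m, ⋃ r' ∈ range n, ⋃ d ∈ range 3, ⋃ p ∈ range (2 ^ (m - r)),
        ⋃ p' ∈ range (2 ^ (n - r')),
          {ω | δ r r' ≤ |Z (r + r' + d) (dyadicBlock m r p) (dyadicBlock n r' p') ω|} := by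
    intro ω hω
    by_contra hcon
    simp only [Set.mem_union, Set.mem_iUnion, Set.mem_ofPred_eq, not_or, not_exists, not_le,
      not_lt, exists_prop, not_and] at hcon
    obtain ⟨hsmall, hblocks⟩ := hcon
    obtain ⟨u, hu, v, hv, huv⟩ := exists_le_of_le_maxNN (by positivity) hω
    rw [mem_Icc] at hu hv
    have hu' : u < 2 ^ m := by omega
    have hv' : v < 2 ^ n := by omega
    have chain := abs_rectSum_le (T := fun k i j => truncUp X b k i j ω)
      (μ := fun k i j => ∫ ω', truncUp X b k i j ω') (m := m) (n := n) (u := u) (v := v)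
      (c := δ) (e := fun r r' => b (2 ^ (r + r' + 2)) * maxNN (2 ^ m - 1) (2 ^ n - 1)
        (fun i j => (volume {ω | b (2 ^ (r + r')) < X i j ω}).toReal)) hu' hv'
      (fun r r' => mul_nonneg (hbp _ Nat.one_le_two_pow).le (maxNN_nonneg _ _ _))
      (fun k i _ j _ => truncUp_mono hbm (Nat.le_succ k) i j ω)
      (fun k i hi j hj => integral_truncUp_mono hbm hbp
        (hX i j (mem_Icc.1 hi).1 (mem_Icc.1 hj).1)
        (hm i j (mem_Icc.1 hi).1 (mem_Icc.1 hj).1) (Nat.le_succ k))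
      (by
        intro r _ r' _ d hd i hi j hj
        rw [mem_range] at hd
        have hi1 := (mem_Icc.1 hi).1
        have hj1 := (mem_Icc.1 hj).1
        refine (integral_truncUp_succ_sub_le hbp (hX i j hi1 hj1) (hm i j hi1 hj1) _).trans ?_
        refine mul_le_mul (hbm (Nat.pow_le_pow_right two_pos (by omega))) ?_
          ENNReal.toReal_nonneg (hbp _ Nat.one_le_two_pow).le
        refine le_trans ?_ (le_maxNN
          (g := fun i j => (volume {ω | b (2 ^ (r + r')) < X i j ω}).toReal) hi hj)
        refine ENNReal.toReal_mono (measure_ne_top _ _) (measure_mono fun ω' hω' => ?_)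
        exact lt_of_le_of_lt (hbm (Nat.pow_le_pow_right two_pos (by omega))) hω')
      (by
        intro r hr r' hr' d hd p hp p' hp'
        have := hblocks r (mem_range.2 hr) r' (mem_range.2 hr') d hd p hp p' hp'
        rw [hZ] at this
        exact this.le)
    -- the chaining bound is at most `ε a + ε a / 6`
    have htot : ∑ r ∈ range m, ∑ r' ∈ range n, (9 * δ r r' + 4 * (2 ^ (r + r') *
        (b (2 ^ (r + r' + 2)) * maxNN (2 ^ m - 1) (2 ^ n - 1)
        (fun i j => (volume {ω | b (2 ^ (r + r')) < X i j ω}).toReal)))) ≤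
        ε * a + ε * a / 6 := by
      simp only [sum_add_distrib]
      refine add_le_add (le_of_eq ?_) ?_
      · simp only [hadef, sum_Icc_one_eq, mul_sum, hδ]
        exact sum_congr rfl fun r _ => sum_congr rfl fun r' _ => by ring
      · rw [le_div_iff₀ (by norm_num), mul_comm]
        refine le_trans (le_of_eq ?_) hb
        simp only [sum_Icc_one_eq]
        congr 1
        refine sum_congr rfl fun r _ => sum_congr rfl fun r' _ => ?_
        rw [show r + 1 + (r' + 1) - 2 = r + r' by omega,
          show r + 1 + (r' + 1) = r + r' + 2 by ring]
        ring
    -- on this event truncation at the top level changes nothing but the means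
    have hrep : rectSum (fun i j => X i j ω - ∫ ω', X i j ω') (Icc 1 u) (Icc 1 v) =
        rectSum (fun i j => truncUp X b (m + n) i j ω - ∫ ω', truncUp X b (m + n) i j ω')
          (Icc 1 u) (Icc 1 v) - rectSum (fun i j => (∫ ω', X i j ω') -
            ∫ ω', truncUp X b (m + n) i j ω') (Icc 1 u) (Icc 1 v) := by
      rw [← rectSum_sub]
      refine sum_congr rfl fun i hi => sum_congr rfl fun j hj => ?_
      rw [mem_Icc] at hi hj
      have := hsmall i (mem_Icc.2 ⟨hi.1, by omega⟩) j (mem_Icc.2 ⟨hj.1, by omega⟩)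
      beta_reduce
      rw [truncUp_eq_min, min_eq_left this]
      ring
    have hbias0 : 0 ≤ rectSum (fun i j => (∫ ω', X i j ω') -
        ∫ ω', truncUp X b (m + n) i j ω') (Icc 1 u) (Icc 1 v) := by
      refine rectSum_nonneg fun i hi' j hj' => sub_nonneg.2 ?_
      have hi1 := (mem_Icc.1 hi').1
      have hj1 := (mem_Icc.1 hj').1
      exact integral_truncUp_le hbp (hX i j hi1 hj1) (hm i j hi1 hj1) (hi i j hi1 hj1) _
    have hbias : rectSum (fun i j => (∫ ω', X i j ω') -
        ∫ ω', truncUp X b (m + n) i j ω') (Icc 1 u) (Icc 1 v) ≤ ε * a := by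
      refine le_trans (le_trans (rectSum_mono (g := fun i j =>
        ∫ ω, (if b (2 ^ (m + n)) < X i j ω then X i j ω else 0)) fun i hi' j hj' => ?_)
        (rectSum_subset (Icc_subset_Icc_right hu'.le) (Icc_subset_Icc_right hv'.le)
          fun i hi' j hj' => ?_)) ha
      · have hi1 := (mem_Icc.1 hi').1
        have hj1 := (mem_Icc.1 hj').1
        exact integral_sub_truncUp_le hbp (hX i j hi1 hj1) (hm i j hi1 hj1) (hi i j hi1 hj1) _
      · refine integral_nonneg fun ω' => ?_
        dsimp only
        split_ifs
        · exact hX i j (mem_Icc.1 hi').1 (mem_Icc.1 hj').1 ω'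
        · exact le_rfl
    have huv' : 3 * a * ε ≤ |rectSum (fun i j => X i j ω - ∫ ω', X i j ω')
      (Icc 1 u) (Icc 1 v)| := huv
    rw [hrep] at huv'
    have hc := chain.trans htot
    have hpos : 0 < ε * a := mul_pos hε ha0
    have : |rectSum (fun i j => truncUp X b (m + n) i j ω - ∫ ω', truncUp X b (m + n) i j ω')
          (Icc 1 u) (Icc 1 v) - rectSum (fun i j => (∫ ω', X i j ω') -
            ∫ ω', truncUp X b (m + n) i j ω') (Icc 1 u) (Icc 1 v)| < 3 * a * ε := by
      rw [abs_le] at hc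
      rw [abs_lt]
      constructor <;> linarith [hc.1, hc.2]
    exact absurd huv' (not_le.2 this)
  have step : volume.real {ω | 3 * a * ε ≤
      maxDS (fun i j => X i j ω - ∫ ω', X i j ω') (2 ^ m - 1) (2 ^ n - 1)} ≤
      (∑ i ∈ Icc 1 (2 ^ m), ∑ j ∈ Icc 1 (2 ^ n), volume.real {ω | b (2 ^ (m + n)) < X i j ω}) +
      ∑ r ∈ range m, ∑ r' ∈ range n, ∑ d ∈ range 3, ∑ p ∈ range (2 ^ (m - r)),
        ∑ p' ∈ range (2 ^ (n - r')), volume.real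
          {ω | δ r r' ≤ |Z (r + r' + d) (dyadicBlock m r p) (dyadicBlock n r' p') ω|} := by
    refine (measureReal_mono incl).trans ((measureReal_union_le _ _).trans (add_le_add ?_ ?_))
    · refine (measureReal_biUnion_finset_le _ _).trans (sum_le_sum fun i _ => ?_)
      exact measureReal_biUnion_finset_le _ _
    · refine (measureReal_biUnion_finset_le _ _).trans (sum_le_sum fun r _ => ?_)
      refine (measureReal_biUnion_finset_le _ _).trans (sum_le_sum fun r' _ => ?_)
      refine (measureReal_biUnion_finset_le _ _).trans (sum_le_sum fun d _ => ?_)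
      refine (measureReal_biUnion_finset_le _ _).trans (sum_le_sum fun p _ => ?_)
      exact measureReal_biUnion_finset_le _ _
  refine step.trans (add_le_add le_rfl ?_)
  simp only [sum_Icc_one_eq, mul_sum]
  refine sum_le_sum fun r hr => sum_le_sum fun r' hr' => ?_
  rw [mem_range] at hr hr'
  set E₁ := maxNN (2 ^ m - 1) (2 ^ n - 1)
    (fun i j => ∫ ω, truncUp X b (r + 1 + (r' + 1)) i j ω ^ (2 * q)) with hE₁
  set E₂ := maxNN (2 ^ m - 1) (2 ^ n - 1)
    (fun i j => (∫ ω, truncUp X b (r + 1 + (r' + 1)) i j ω ^ 2) ^ q) with hE₂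
  have hE₁0 : 0 ≤ E₁ := maxNN_nonneg _ _ _
  have hE₂0 : 0 ≤ E₂ := maxNN_nonneg _ _ _
  have hC0 : 0 ≤ max C₀ 0 := le_max_right _ _
  have hl : 0 < lam m n (r + 1) (r' + 1) :=
    hlam m n (r + 1) (r' + 1) (by omega) (by omega) (by omega) (by omega)
  have hpiece : ∀ d ∈ range 3, ∀ p ∈ range (2 ^ (m - r)), ∀ p' ∈ range (2 ^ (n - r')),
      volume.real {ω | δ r r' ≤
        |Z (r + r' + d) (dyadicBlock m r p) (dyadicBlock n r' p') ω|} ≤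
      δ r r' ^ (-(2 * q)) * (max C₀ 0 * (((2 ^ (r + r') : ℕ) : ℝ) * E₁ +
        ((2 ^ (r + r') : ℕ) : ℝ) ^ q * E₂)) := by
    intro d hd p _ p' _
    rw [mem_range] at hd
    simp only [hZ]
    refine rectSum_tail_le hq (dyadicBlock_subset _ _ _) (dyadicBlock_subset _ _ _) hm hX hH
      hbm hbp (by omega) ?_ (hδ0 r hr r' hr')
    rw [pow_add]
    exact Nat.mul_le_mul (card_dyadicBlock_le _ _ _) (card_dyadicBlock_le _ _ _)
  refine (sum_le_sum fun d hd => sum_le_sum fun p hp => sum_le_sum fun p' hp' =>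
    hpiece d hd p hp p' hp').trans ?_
  simp only [sum_const, card_range, nsmul_eq_mul]
  have hδpow : δ r r' ^ (-(2 * q)) =
      9 ^ (2 * q) * ε ^ (-(2 * q)) * lam m n (r + 1) (r' + 1) ^ (-(2 * q)) := by
    rw [hδ, Real.div_rpow (by positivity) (by norm_num), Real.mul_rpow hl.le hε.le,
      Real.rpow_neg (by norm_num : (0 : ℝ) ≤ 9), div_inv_eq_mul]
    ring
  have hLq : ((2 ^ (r + r') : ℕ) : ℝ) ^ q ≤
      2 ^ (r + r') * 2 ^ (((r + 1 + (r' + 1) : ℕ) : ℝ) * (q - 1)) := by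
    rw [Nat.cast_pow, Nat.cast_ofNat, ← Real.rpow_natCast, ← Real.rpow_mul two_pos.le,
      ← Real.rpow_add two_pos]
    refine Real.rpow_le_rpow_of_exponent_le one_le_two ?_
    push_cast
    nlinarith
  have hcount : (2 : ℝ) ^ (m - r) * 2 ^ (n - r') * 2 ^ (r + r') = 2 ^ (m + n) := by
    rw [← pow_add, ← pow_add]
    congr 1
    omega
  rw [hδpow]
  set G : ℝ := 2 ^ (((r + 1 + (r' + 1) : ℕ) : ℝ) * (q - 1)) with hG
  have hmono : ((2 ^ (r + r') : ℕ) : ℝ) * E₁ + ((2 ^ (r + r') : ℕ) : ℝ) ^ q * E₂ ≤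
      2 ^ (r + r') * (E₁ + G * E₂) := by
    have := mul_le_mul_of_nonneg_right hLq hE₂0
    push_cast at this ⊢
    linarith
  calc _ = (3 * 9 ^ (2 * q) * max C₀ 0 * ε ^ (-(2 * q)) *
        lam m n (r + 1) (r' + 1) ^ (-(2 * q)) * ((2 : ℝ) ^ (m - r) * 2 ^ (n - r'))) *
        (((2 ^ (r + r') : ℕ) : ℝ) * E₁ + ((2 ^ (r + r') : ℕ) : ℝ) ^ q * E₂) := by
        push_cast
        ring
    _ ≤ (3 * 9 ^ (2 * q) * max C₀ 0 * ε ^ (-(2 * q)) *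
        lam m n (r + 1) (r' + 1) ^ (-(2 * q)) * ((2 : ℝ) ^ (m - r) * 2 ^ (n - r'))) *
        (2 ^ (r + r') * (E₁ + G * E₂)) := mul_le_mul_of_nonneg_left hmono (by positivity)
    _ = _ := by
        rw [← hcount]
        ring
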